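/- Let m be an odd positive integer with m ≡ 0 (mod 3). Then 3 divides the class number of the imaginary quadratic field ℚ(√(−3(4m³ + 1))). -/

import Mathlib

open NumberField Polynomial
open scoped Pointwise

/-!
The cubic `X ^ 3 + 3 * m * X - 1` has discriminant `-27 * (4 * m ^ 3 + 1)`, so over
`K = ℚ(√(-3 * (4 * m ^ 3 + 1)))` a root `θ` of it generates a cyclic cubic extension `L`, which
turns out to be unramified. Let `V` be the group of units of `L` of relative norm `1` and `σ` a
generator of the Galois group. Suppose that `3` does not divide the class number of `K`. By Hilbert
90, `u ∈ V` can be written as `a / σ a`. The ideal `(a)` is invariant, so by unramifiedness it comes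
from an ideal of `K`, whose cube is principal as a relative norm, and which is therefore principal.
Hence `a` may be taken to be a unit, and, as every unit of `K` is a cube, a unit of norm `1`. This
shows `V = V ^ (1 - σ)`. Since `(1 - σ) ^ 3 ∈ 3 * ℤ[σ]`, it follows that `V = V ^ 3`, and the
finitely generated group `V` is finite. But `θ ∈ V` is not a root of unity.
-/

section InvariantIdeals

variable {R S G : Type*} [CommRing R] [CommRing S] [Algebra R S] [Group G] [MulSemiringAction G S]

theorem span_sub_smul_eq_top {g : G} (hg : ∀ P : Ideal S, P.IsMaximal → g ∉ P.inertia G) :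
    Ideal.span (Set.range fun x : S ↦ x - g • x) = ⊤ := by
  by_contra hne
  obtain ⟨P, hP, hle⟩ := Ideal.exists_le_maximal _ hne
  refine hg P hP fun x ↦ ?_
  have hx : x - g • x ∈ P := hle (Ideal.subset_span ⟨x, rfl⟩)
  rw [← neg_sub]
  exact P.neg_mem hx

variable (S G) in
/-- The `S`-subalgebra of `G → S` generated by the orbit maps `g ↦ g • y`. When `R` is the ring of
invariants this is the image of the canonical map `S ⊗[R] S → (G → S)`, `x ⊗ y ↦ (x * g • y)_g`. -/
def orbitMapSubalgebra : Subalgebra S (G → S) :=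
  Algebra.adjoin S (Set.range fun (y : S) (g : G) ↦ g • y)

theorem exists_mem_orbitMapSubalgebra_apply_eq {h : G} {c : S}
    (hc : c ∈ Ideal.span (Set.range fun x : S ↦ x - h • x)) :
    ∃ f ∈ orbitMapSubalgebra S G, f 1 = c ∧ f h = 0 := by
  induction hc using Submodule.span_induction with
  | mem c hc =>
    obtain ⟨y, rfl⟩ := hc
    refine ⟨(fun g ↦ g • y) - algebraMap S (G → S) (h • y),
      sub_mem (Algebra.subset_adjoin ⟨y, rfl⟩) (algebraMap_mem _ _), ?_, ?_⟩ <;> simp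
  | zero => exact ⟨0, zero_mem _, rfl, rfl⟩
  | add c d _ _ hc hd =>
    obtain ⟨f, hf, rfl, hfh⟩ := hc
    obtain ⟨f', hf', rfl, hfh'⟩ := hd
    exact ⟨f + f', add_mem hf hf', rfl, by simp [hfh, hfh']⟩
  | smul s c _ hc =>
    obtain ⟨f, hf, rfl, hfh⟩ := hc
    exact ⟨s • f, Subalgebra.smul_mem _ hf s, rfl, by simp [hfh]⟩

theorem single_one_mem_orbitMapSubalgebra [Finite G] [DecidableEq G]
    (hG : ∀ P : Ideal S, P.IsMaximal → P.inertia G = ⊥) :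
    Pi.single 1 1 ∈ orbitMapSubalgebra S G := by
  have := Fintype.ofFinite G
  have hsep (h : G) (hh : h ∈ Finset.univ.erase 1) :
      ∃ f ∈ orbitMapSubalgebra S G, f 1 = 1 ∧ f h = 0 := by
    refine exists_mem_orbitMapSubalgebra_apply_eq ?_
    rw [span_sub_smul_eq_top fun P hP hmem ↦
      Finset.ne_of_mem_erase hh (by simpa [hG P hP] using hmem)]
    trivial
  choose! f hf hf_one hf_self using hsep
  convert Subalgebra.prod_mem _ hf
  ext g
  rw [Finset.prod_apply]
  rcases eq_or_ne g 1 with rfl | hg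
  · rw [Pi.single_eq_same, Finset.prod_eq_one hf_one]
  · have hg' := Finset.mem_erase.mpr ⟨hg, Finset.mem_univ g⟩
    rw [Pi.single_eq_of_ne hg, Finset.prod_eq_zero (f := fun h ↦ f h g) hg' (hf_self g hg')]

theorem sum_smul_mem_map_comap [Fintype G] [Algebra.IsInvariant R S G] {J : Ideal S}
    (hJ : ∀ g : G, g • J = J) {x : S} (hx : x ∈ J) :
    ∑ g : G, g • x ∈ (J.comap (algebraMap R S)).map (algebraMap R S) := by
  have hsmul (g : G) : g • x ∈ J := hJ g ▸ Ideal.smul_mem_pointwise_smul g x J hx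
  obtain ⟨r, hr⟩ := Algebra.IsInvariant.isInvariant (A := R) (G := G) (∑ g : G, g • x)
    fun h ↦ by
      rw [Finset.smul_sum]
      exact Fintype.sum_equiv (Equiv.mulLeft h) _ _ fun g ↦ by simp [mul_smul]
  rw [← hr]
  refine Ideal.mem_map_of_mem _ ?_
  rw [Ideal.mem_comap, hr]
  exact J.sum_mem fun g _ ↦ hsmul g

theorem sum_mul_smul_mem_map_comap [Fintype G] [Algebra.IsInvariant R S G] {J : Ideal S}
    (hJ : ∀ g : G, g • J = J) {f : G → S} (hf : f ∈ orbitMapSubalgebra S G) {x : S} (hx : x ∈ J) :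
    ∑ g : G, f g * g • x ∈ (J.comap (algebraMap R S)).map (algebraMap R S) := by
  set I := (J.comap (algebraMap R S)).map (algebraMap R S)
  suffices h : ∀ φ : G → S, (∀ x ∈ J, ∑ g, φ g * g • x ∈ I) → ∀ x ∈ J, ∑ g, (f * φ) g * g • x ∈ I by
    simpa using h 1 (by simpa using fun _ ↦ sum_smul_mem_map_comap hJ) x hx
  clear hx x
  induction hf using Algebra.adjoin_induction with
  | mem f hf =>
    obtain ⟨y, rfl⟩ := hf
    intro φ hφ x hx
    convert hφ (y * x) (J.mul_mem_left y hx) using 2 with g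
    simp only [Pi.mul_apply, smul_mul']
    ring
  | algebraMap c =>
    intro φ hφ x hx
    convert I.mul_mem_left c (hφ x hx) using 1
    simp [Finset.mul_sum, mul_assoc]
  | add f f' _ _ hf hf' =>
    intro φ hφ x hx
    convert I.add_mem (hf φ hφ x hx) (hf' φ hφ x hx) using 1
    simp [add_mul, Finset.sum_add_distrib]
  | mul f f' _ _ hf hf' =>
    intro φ hφ
    rw [mul_assoc]
    exact hf _ (hf' φ hφ)

theorem map_comap_algebraMap_of_inertia_eq_bot [Finite G] [Algebra.IsInvariant R S G]
    (hG : ∀ P : Ideal S, P.IsMaximal → P.inertia G = ⊥) {J : Ideal S}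
    (hJ : ∀ g : G, g • J = J) :
    (J.comap (algebraMap R S)).map (algebraMap R S) = J := by
  classical
  have := Fintype.ofFinite G
  refine le_antisymm Ideal.map_comap_le fun x hx ↦ ?_
  simpa [Pi.single_apply] using
    sum_mul_smul_mem_map_comap (R := R) hJ (single_one_mem_orbitMapSubalgebra hG) hx

end InvariantIdeals

section Torsion

theorem exists_one_sub_pow_prime_eq {E : Type*} [Ring E] {p : ℕ} (hp : p.Prime) {φ : E}
    (hφ : φ ^ p = 1) : ∃ ψ : E, (1 - φ) ^ p = p * ψ := by
  obtain ⟨ψ, hψ⟩ := (Commute.one_left (-φ)).exists_add_pow_prime_eq hp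
  rw [one_pow, mul_one, mul_assoc, ← sub_eq_add_neg] at hψ
  rcases hp.eq_two_or_odd' with rfl | hodd
  · exact ⟨1 + -φ * ψ, by rw [hψ, even_two.neg_pow, hφ]; push_cast; noncomm_ring⟩
  · exact ⟨-φ * ψ, by rw [hψ, hodd.neg_pow, hφ, add_neg_cancel, zero_add]⟩

theorem exists_smul_eq_zero_of_surjective_one_sub {A : Type*} [AddCommGroup A] [Module.Finite ℤ A]
    {p : ℕ} (hp : p.Prime) {φ : Module.End ℤ A} (hφ : φ ^ p = 1)
    (hsurj : Function.Surjective ⇑(1 - φ)) : ∃ n : ℤ, n ≠ 0 ∧ ∀ a : A, n • a = 0 := by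
  obtain ⟨ψ, hψ⟩ := exists_one_sub_pow_prime_eq hp hφ
  have hle : (⊤ : Submodule ℤ A) ≤ Ideal.span {(p : ℤ)} • ⊤ := fun a _ ↦ by
    obtain ⟨b, rfl⟩ := hsurj.iterate p a
    rw [← Module.End.coe_pow, hψ, ← nsmul_eq_mul, ← Nat.cast_smul_eq_nsmul ℤ]
    exact Submodule.smul_mem_smul (Ideal.mem_span_singleton_self _) trivial
  obtain ⟨n, hn, hsmul⟩ :=
    Submodule.exists_sub_one_mem_and_smul_eq_zero_of_fg_of_le_smul _ _ Module.Finite.fg_top hle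
  refine ⟨n, ?_, fun a ↦ hsmul a trivial⟩
  rintro rfl
  rw [Ideal.mem_span_singleton, zero_sub, dvd_neg] at hn
  exact hp.not_isUnit (by exact_mod_cast isUnit_of_dvd_one hn)

theorem isOfFinOrder_of_forall_exists_div_eq {A : Type*} [CommGroup A]
    [Module.Finite ℤ (Additive A)] {p : ℕ} (hp : p.Prime) {φ : Monoid.End A} (hφ : φ ^ p = 1)
    (hsurj : ∀ a, ∃ b, b / φ b = a) (a : A) : IsOfFinOrder a := by
  let φ' : Module.End ℤ (Additive A) := (MonoidHom.toAdditive φ).toIntLinearMap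
  have hφ'_pow (n : ℕ) (b : A) : (φ' ^ n) (.ofMul b) = .ofMul ((φ ^ n) b) := by
    rw [Module.End.coe_pow, Monoid.End.coe_pow]
    exact (Function.Semiconj.iterate_right (f := Additive.ofMul) (ga := φ) (gb := φ')
      (fun _ ↦ rfl) n b).symm
  have hφ' : φ' ^ p = 1 := LinearMap.ext fun b ↦ by
    rw [← ofMul_toMul b, hφ'_pow, hφ]
    rfl
  obtain ⟨n, hn, hsmul⟩ := exists_smul_eq_zero_of_surjective_one_sub hp hφ' fun a ↦
    (hsurj a.toMul).imp fun b hb ↦ congrArg Additive.ofMul hb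
  exact isOfFinOrder_iff_zpow_eq_one.mpr ⟨n, hn, hsmul (.ofMul a)⟩

end Torsion

section HilbertNinety

open Finset

variable {S G : Type*} [CommRing S] [IsDomain S] [Group G] [MulSemiringAction G S]
  [FaithfulSMul G S]

theorem linearIndependent_pow_smul (σ : G) :
    LinearIndependent S fun (i : Fin (orderOf σ)) (x : S) ↦ σ ^ (i : ℕ) • x := by
  refine (linearIndependent_monoidHom S S).comp
    (fun i : Fin (orderOf σ) ↦ (MulSemiringAction.toRingHom G S (σ ^ (i : ℕ)) : S →* S))
    fun i j hij ↦ Fin.ext <| pow_injOn_Iio_orderOf i.2 j.2 ?_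
  exact FaithfulSMul.eq_of_smul_eq_smul (α := S) fun x ↦ DFunLike.congr_fun hij x

theorem exists_ne_zero_mul_smul_eq_of_prod_pow_smul_eq_one {σ : G} (hσ : IsOfFinOrder σ) {u : S}
    (hu : ∏ i ∈ range (orderOf σ), σ ^ i • u = 1) : ∃ a : S, a ≠ 0 ∧ u * σ • a = a := by
  let c (i : ℕ) : S := ∏ j ∈ range i, σ ^ j • u
  have hc_succ (i : ℕ) : c (i + 1) = u * σ • c i := by
    simp only [c, prod_range_succ', smul_prod', smul_smul, ← pow_succ', pow_zero, one_smul,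
      mul_comm]
  obtain ⟨z, hz⟩ : ∃ z : S, ∑ i ∈ range (orderOf σ), c i * σ ^ i • z ≠ 0 := by
    by_contra! hzero
    have hc_zero := Fintype.linearIndependent_iff.mp (linearIndependent_pow_smul (S := S) σ)
      (fun i ↦ c i) (funext fun z ↦ by simpa [sum_range] using hzero z) ⟨0, hσ.orderOf_pos⟩
    simp [c] at hc_zero
  refine ⟨_, hz, ?_⟩
  have hshift : u * σ • ∑ i ∈ range (orderOf σ), c i * σ ^ i • z =
      ∑ i ∈ range (orderOf σ), c (i + 1) * σ ^ (i + 1) • z := by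
    simp only [smul_sum, mul_sum, hc_succ, smul_mul', smul_smul, pow_succ', mul_assoc]
  have hcycle : c (orderOf σ) * σ ^ orderOf σ • z = c 0 * σ ^ 0 • z := by
    simp [c, hu, pow_orderOf_eq_one]
  rw [hshift, ← add_left_inj (c 0 * σ ^ 0 • z), ← sum_range_succ' (fun i ↦ c i * σ ^ i • z),
    sum_range_succ, hcycle]

end HilbertNinety

section RelativeUnits

variable {K L : Type*} [Field K] [Field L] [Algebra K L]

theorem norm_smul_ringOfIntegers (σ : Gal(L/K)) (x : 𝓞 L) :
    RingOfIntegers.norm K (σ • x) = RingOfIntegers.norm K x := by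
  refine RingOfIntegers.ext ?_
  rw [RingOfIntegers.coe_norm, RingOfIntegers.coe_norm]
  exact Algebra.norm_eq_of_algEquiv σ (x : L)

theorem algebraMap_norm_ringOfIntegers [FiniteDimensional K L] [IsGalois K L] (x : 𝓞 L) :
    algebraMap (𝓞 K) (𝓞 L) (RingOfIntegers.norm K x) = ∏ τ : Gal(L/K), τ • x := by
  refine RingOfIntegers.ext ?_
  refine (Algebra.norm_eq_prod_automorphisms K (x : L)).trans ?_
  exact (map_prod (algebraMap (𝓞 L) L) (fun τ : Gal(L/K) ↦ τ • x) _).symm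

variable (K L) in
/-- The units of relative norm `1` of the ring of integers of `L`, for a field extension `L / K`. -/
noncomputable def normOneUnits : Subgroup (𝓞 L)ˣ :=
  (Units.map (RingOfIntegers.norm K : 𝓞 L →* 𝓞 K)).ker

theorem mem_normOneUnits {u : (𝓞 L)ˣ} :
    u ∈ normOneUnits K L ↔ RingOfIntegers.norm K (u : 𝓞 L) = 1 := by
  rw [normOneUnits, MonoidHom.mem_ker, Units.ext_iff]
  rfl

noncomputable instance : MulDistribMulAction Gal(L/K) (normOneUnits K L) where
  smul σ u := ⟨Units.map (MulSemiringAction.toRingHom Gal(L/K) (𝓞 L) σ : 𝓞 L →* 𝓞 L) u.1,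
    mem_normOneUnits.mpr ((norm_smul_ringOfIntegers σ _).trans (mem_normOneUnits.mp u.2))⟩
  one_smul u := Subtype.ext <| Units.ext <| one_smul Gal(L/K) (u.1 : 𝓞 L)
  mul_smul σ τ u := Subtype.ext <| Units.ext <| mul_smul σ τ (u.1 : 𝓞 L)
  smul_one σ := Subtype.ext <| Units.ext <| smul_one (M := Gal(L/K)) (N := 𝓞 L) σ
  smul_mul σ u v := Subtype.ext <| Units.ext <| smul_mul' σ (u.1 : 𝓞 L) v.1

theorem coe_smul_normOneUnits (σ : Gal(L/K)) (u : normOneUnits K L) :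
    ((σ • u).1 : 𝓞 L) = σ • (u.1 : 𝓞 L) :=
  rfl

variable [NumberField K] [NumberField L]

instance : Module.Finite ℤ (Additive (normOneUnits K L)) :=
  Module.Finite.of_injective (MonoidHom.toAdditive (normOneUnits K L).subtype).toIntLinearMap
    Subtype.val_injective

variable [IsGalois K L]

theorem exists_span_algebraMap_eq_of_forall_smul_eq
    (hcoprime : (Module.finrank K L).Coprime (classNumber K))
    (hinertia : ∀ P : Ideal (𝓞 L), P.IsMaximal → P.inertia Gal(L/K) = ⊥) {a : 𝓞 L}
    (ha : ∀ τ : Gal(L/K), τ • Ideal.span {a} = Ideal.span {a}) :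
    ∃ b : 𝓞 K, Ideal.span {algebraMap (𝓞 K) (𝓞 L) b} = Ideal.span {a} := by
  set I := (Ideal.span {a}).comap (algebraMap (𝓞 K) (𝓞 L))
  have hmap : I.map (algebraMap (𝓞 K) (𝓞 L)) = Ideal.span {a} :=
    map_comap_algebraMap_of_inertia_eq_bot hinertia ha
  have hpow : (I ^ Module.finrank K L).IsPrincipal := by
    rw [IsFractionRing.finrank_eq (𝓞 K) K (𝓞 L) L, ← Ideal.relNorm_algebraMap (𝓞 L) I, hmap,
      Ideal.relNorm_singleton]
    exact ⟨_, rfl⟩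
  obtain ⟨b, hb⟩ := Ideal.IsPrincipal.of_isPrincipal_pow_of_coprime hcoprime hpow
  exact ⟨b, by rw [← hmap, hb, ← Ideal.submodule_span_eq, Ideal.map_span, Set.image_singleton]⟩

variable {σ : Gal(L/K)}

theorem exists_ne_zero_mul_smul_eq_of_norm_eq_one (hσ : ∀ τ, τ ∈ Subgroup.zpowers σ) {u : 𝓞 L}
    (hu : RingOfIntegers.norm K u = 1) : ∃ a : 𝓞 L, a ≠ 0 ∧ u * σ • a = a := by
  classical
  have := (IsGaloisGroup.of_isFractionRing Gal(L/K) (𝓞 K) (𝓞 L) K L).faithful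
  refine exists_ne_zero_mul_smul_eq_of_prod_pow_smul_eq_one (isOfFinOrder_of_finite σ) ?_
  rw [← map_one (algebraMap (𝓞 K) (𝓞 L)), ← hu, algebraMap_norm_ringOfIntegers,
    ← IsCyclic.image_range_orderOf hσ, Finset.prod_image fun i hi j hj ↦
      pow_injOn_Iio_orderOf (by simpa using hi) (by simpa using hj)]

theorem exists_unit_mul_smul_eq_of_norm_eq_one (hσ : ∀ τ, τ ∈ Subgroup.zpowers σ)
    (hcoprime : (Module.finrank K L).Coprime (classNumber K))
    (hinertia : ∀ P : Ideal (𝓞 L), P.IsMaximal → P.inertia Gal(L/K) = ⊥) {u : (𝓞 L)ˣ}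
    (hu : RingOfIntegers.norm K (u : 𝓞 L) = 1) :
    ∃ e : (𝓞 L)ˣ, (u : 𝓞 L) * σ • (e : 𝓞 L) = e := by
  obtain ⟨a, ha_ne, ha⟩ := exists_ne_zero_mul_smul_eq_of_norm_eq_one hσ hu
  have hstab (τ : Gal(L/K)) : τ • Ideal.span {a} = Ideal.span {a} := by
    suffices σ ∈ MulAction.stabilizer Gal(L/K) (Ideal.span {a}) from
      Subgroup.zpowers_le.mpr this (hσ τ)
    rw [MulAction.mem_stabilizer_iff, Ideal.smul_closure, Set.smul_set_singleton,
      Ideal.span_singleton_eq_span_singleton]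
    exact ⟨u, by rw [mul_comm, ha]⟩
  obtain ⟨b, hb⟩ := exists_span_algebraMap_eq_of_forall_smul_eq hcoprime hinertia hstab
  obtain ⟨e, rfl⟩ := Ideal.span_singleton_eq_span_singleton.mp hb
  refine ⟨e, mul_left_cancel₀ (left_ne_zero_of_mul ha_ne) ?_⟩
  rw [smul_mul', smul_algebraMap] at ha
  linear_combination ha

theorem exists_div_smul_eq_of_coprime_classNumber (hσ : ∀ τ, τ ∈ Subgroup.zpowers σ)
    (hcoprime : (Module.finrank K L).Coprime (classNumber K))
    (hinertia : ∀ P : Ideal (𝓞 L), P.IsMaximal → P.inertia Gal(L/K) = ⊥)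
    (hpow : ∀ v : (𝓞 K)ˣ, ∃ w, w ^ Module.finrank K L = v) (u : normOneUnits K L) :
    ∃ e : normOneUnits K L, e / σ • e = u := by
  obtain ⟨e, he⟩ :=
    exists_unit_mul_smul_eq_of_norm_eq_one hσ hcoprime hinertia (mem_normOneUnits.mp u.2)
  obtain ⟨w, hw⟩ := hpow (Units.map (RingOfIntegers.norm K) e)
  let w' : (𝓞 L)ˣ := Units.map (algebraMap (𝓞 K) (𝓞 L)) w⁻¹
  have hw' : σ • (w' : 𝓞 L) = w' := smul_algebraMap σ _
  have hmem : e * w' ∈ normOneUnits K L := by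
    have hnorm : Units.map (RingOfIntegers.norm K) w' = w⁻¹ ^ Module.finrank K L :=
      Units.ext (RingOfIntegers.norm_algebraMap K _)
    rw [normOneUnits, MonoidHom.mem_ker, map_mul, ← hw, hnorm, ← mul_pow, mul_inv_cancel, one_pow]
  refine ⟨⟨e * w', hmem⟩, div_eq_iff_eq_mul.mpr <| Subtype.ext <| Units.ext ?_⟩
  simp [coe_smul_normOneUnits, smul_mul', hw', ← mul_assoc, he]

theorem isOfFinOrder_normOneUnits_of_not_dvd_classNumber {p : ℕ} (hp : p.Prime)
    (hdeg : Module.finrank K L = p) (hclass : ¬ p ∣ classNumber K)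
    (hinertia : ∀ P : Ideal (𝓞 L), P.IsMaximal → P.inertia Gal(L/K) = ⊥)
    (hpow : ∀ v : (𝓞 K)ˣ, ∃ w, w ^ p = v) (u : normOneUnits K L) : IsOfFinOrder u := by
  subst hdeg
  have := Fact.mk hp
  have hcard : Nat.card Gal(L/K) = Module.finrank K L := IsGalois.card_aut_eq_finrank K L
  obtain ⟨σ, hσ⟩ := (isCyclic_of_prime_card hcard).exists_generator
  have hσ_pow : MulDistribMulAction.toMonoidEnd Gal(L/K) (normOneUnits K L) σ
      ^ Module.finrank K L = 1 := by
    rw [← map_pow, ← hcard, pow_card_eq_one', map_one]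
  exact isOfFinOrder_of_forall_exists_div_eq hp hσ_pow
    (exists_div_smul_eq_of_coprime_classNumber hσ
      (hp.coprime_iff_not_dvd.mpr hclass) hinertia hpow) u

end RelativeUnits

section QuadraticFields

theorem isSquare_or_isSquare_mul_of_isSquare_algebraMap {F K : Type*} [Field F] [Field K]
    [Algebra F K] (htwo : (2 : F) ≠ 0) (hdeg : Module.finrank F K = 2) {d e : F} {α : K}
    (hα : α ^ 2 = algebraMap F K d) (hd : ¬IsSquare d) (he : IsSquare (algebraMap F K e)) :
    IsSquare e ∨ IsSquare (d * e) := by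
  have : FiniteDimensional F K := .of_finrank_pos (by lia)
  have hli : LinearIndependent F ![1, α] := by
    rw [LinearIndependent.pair_iff' one_ne_zero]
    rintro q rfl
    rw [Algebra.smul_def, mul_one, ← map_pow] at hα
    exact hd ⟨q, by rw [← (algebraMap F K).injective hα, sq]⟩
  obtain ⟨β, hβ⟩ := he
  obtain ⟨p, q, rfl⟩ : ∃ p q : F, p • 1 + q • α = β := by
    have hspan := hli.span_eq_top_of_card_eq_finrank' (by simp [hdeg])
    rw [← Submodule.mem_span_pair, ← Matrix.range_cons_cons_empty, hspan]
    trivial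
  obtain ⟨hsum, hprod⟩ : p ^ 2 + d * q ^ 2 - e = 0 ∧ 2 * p * q = 0 := by
    refine LinearIndependent.pair_iff.mp hli _ _ ?_
    simp only [Algebra.smul_def, map_mul, map_add, map_sub, map_pow, map_ofNat] at hβ ⊢
    linear_combination -hβ - algebraMap F K q ^ 2 * hα
  rcases mul_eq_zero.mp hprod with hp | rfl
  · obtain rfl : p = 0 := (mul_eq_zero.mp hp).resolve_left htwo
    exact .inr ⟨d * q, by linear_combination -d * hsum⟩
  · exact .inl ⟨p, by linear_combination -hsum⟩

theorem irreducible_map_of_natDegree_eq_three {F K : Type*} [Field F] [Field K] [Algebra F K]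
    (hdeg : Module.finrank F K = 2) {f : F[X]} (hf : Irreducible f) (hmonic : f.Monic)
    (hf_deg : f.natDegree = 3) : Irreducible (f.map (algebraMap F K)) := by
  have : FiniteDimensional F K := .of_finrank_pos (by lia)
  have hmap_deg := f.natDegree_map (algebraMap F K) ▸ hf_deg
  rw [irreducible_iff_roots_eq_zero_of_degree_le_three (by lia) (by lia),
    Multiset.eq_zero_iff_forall_notMem]
  intro x hx
  have hroot : aeval x f = 0 := by
    rw [aeval_def, ← eval_map]
    exact isRoot_of_mem_roots hx
  have hle := minpoly.natDegree_le (A := F) x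
  rw [← minpoly.eq_of_irreducible_of_monic hf hroot hmonic] at hle
  lia

theorem three_not_dvd_orderOf_of_not_isSquare_neg_three {K : Type*} [Field K]
    (hsq : ¬IsSquare (-3 : K)) {x : K} (hx : IsOfFinOrder x) : ¬3 ∣ orderOf x := by
  intro hdvd
  have hζ : IsPrimitiveRoot (x ^ (orderOf x / 3)) 3 :=
    (IsPrimitiveRoot.orderOf x).pow hx.orderOf_pos (Nat.div_mul_cancel hdvd).symm
  have hsum := hζ.geom_sum_eq_zero (by norm_num)
  simp only [Finset.sum_range_succ, Finset.sum_range_zero, zero_add, pow_zero, pow_one] at hsum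
  exact hsq ⟨2 * x ^ (orderOf x / 3) + 1, by linear_combination -4 * hsum⟩

variable {K : Type*} [Field K]

theorem isTotallyComplex_of_pow_two_eq_ratCast {d : ℚ} (hd : d < 0) {α : K} (hα : α ^ 2 = d) :
    IsTotallyComplex K := by
  refine ⟨fun w ↦ InfinitePlace.not_isReal_iff_isComplex.mp fun hw ↦ ?_⟩
  have hsq := congrArg (InfinitePlace.embedding_of_isReal hw) hα
  rw [map_pow, map_ratCast] at hsq
  exact absurd (hsq ▸ sq_nonneg _) (not_le.mpr (by exact_mod_cast hd))

variable [NumberField K]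

theorem isOfFinOrder_unit_of_isTotallyComplex [IsTotallyComplex K]
    (hdeg : Module.finrank ℚ K = 2) (v : (𝓞 K)ˣ) : IsOfFinOrder v := by
  have hrank : Units.rank K = 0 := by
    have hcard := InfinitePlace.card_eq_nrRealPlaces_add_nrComplexPlaces K
    have hreal := IsTotallyComplex.nrRealPlaces_eq_zero K
    have hcomplex := IsTotallyComplex.finrank K
    rw [Units.rank]
    lia
  have : IsEmpty (Fin (Units.rank K)) := by
    rw [hrank]
    infer_instance
  obtain ⟨⟨ζ, f⟩, hζ, -⟩ := Units.exist_unique_eq_mul_prod K v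
  rw [Finset.univ_eq_empty, Finset.prod_empty, mul_one] at hζ
  exact hζ ▸ (CommGroup.mem_torsion _).mp ζ.2

theorem exists_pow_three_eq_unit_of_isTotallyComplex [IsTotallyComplex K]
    (hdeg : Module.finrank ℚ K = 2) (hsq : ¬IsSquare (-3 : K)) (v : (𝓞 K)ˣ) :
    ∃ w : (𝓞 K)ˣ, w ^ 3 = v := by
  let coe : (𝓞 K)ˣ →* K := (algebraMap (𝓞 K) K : 𝓞 K →* K).comp (Units.coeHom (𝓞 K))
  have hcoe : Function.Injective coe := RingOfIntegers.coe_injective.comp Units.val_injective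
  have hv : IsOfFinOrder (coe v) := coe.isOfFinOrder (isOfFinOrder_unit_of_isTotallyComplex hdeg v)
  have hcoprime : Nat.Coprime 3 (orderOf v) := by
    rw [Nat.prime_three.coprime_iff_not_dvd, ← orderOf_injective coe hcoe]
    exact three_not_dvd_orderOf_of_not_isSquare_neg_three hsq hv
  obtain ⟨n, hn⟩ := exists_pow_eq_self_of_coprime hcoprime
  exact ⟨v ^ n, by rw [pow_right_comm, hn]⟩

end QuadraticFields

section FourMulCubeAddOne

variable {m : ℤ}

theorem not_isSquare_four_mul_pow_three_add_one (hm : m ≠ 0) : ¬IsSquare (4 * m ^ 3 + 1) := by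
  rintro ⟨n, hn⟩
  have hn_odd : Odd n := by
    refine Int.Odd.of_mul_left (n := n) ?_
    exact hn ▸ ⟨2 * m ^ 3, by ring⟩
  obtain ⟨j, rfl⟩ := hn_odd
  have hj : j * (j + 1) = m ^ 3 := by linarith
  have hcoprime : IsCoprime j (j + 1) := ⟨-1, 1, by ring⟩
  obtain ⟨a, rfl⟩ := Int.eq_pow_of_mul_eq_pow_odd_left hcoprime (by decide) hj
  obtain ⟨b, hb⟩ := Int.eq_pow_of_mul_eq_pow_odd_right hcoprime (by decide) hj
  have hab : a ^ 3 * b ^ 3 ≠ 0 := by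
    rw [← hb, hj]
    positivity
  exact fermatLastTheoremFor_iff_int.mp fermatLastTheoremThree a 1 b
    (by rintro rfl; simp at hab) one_ne_zero (by rintro rfl; simp at hab) (by rw [one_pow, hb])

theorem not_isSquare_neg_three_of_pow_two_eq {K : Type*} [Field K] [CharZero K]
    (hdeg : Module.finrank ℚ K = 2) (hm : 0 < m) {α : K}
    (hα : α ^ 2 = -3 * (4 * (m : K) ^ 3 + 1)) : ¬IsSquare (-3 : K) := by
  have : (0 : ℚ) < m := by exact_mod_cast hm
  have hd : ¬IsSquare (-3 * (4 * (m : ℚ) ^ 3 + 1)) := fun hd ↦ by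
    have hpos : 0 < 4 * (m : ℚ) ^ 3 + 1 := by positivity
    linarith [hd.nonneg]
  intro hsq
  rcases isSquare_or_isSquare_mul_of_isSquare_algebraMap two_ne_zero hdeg
    (e := -3) (by simpa using hα) hd (by simpa using hsq) with hneg | ⟨q, hq⟩
  · exact absurd hneg.nonneg (by norm_num)
  · refine not_isSquare_four_mul_pow_three_add_one hm.ne' (Rat.isSquare_intCast_iff.mp ⟨q / 3, ?_⟩)
    push_cast
    linear_combination hq / 9

end FourMulCubeAddOne

section DepressedCubic

/-- The cubic `X ^ 3 + 3 * m * X - 1`, of discriminant `-27 * (4 * m ^ 3 + 1)`, whose roots generate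
the unramified cubic extension. -/
noncomputable def depressedCubic (R : Type*) [CommRing R] (m : ℤ) : R[X] :=
  X ^ 3 + C (3 * (m : R)) * X - 1

variable {R : Type*} [CommRing R] {m : ℤ}

theorem monic_depressedCubic : (depressedCubic R m).Monic := by
  rw [depressedCubic]
  monicity!

theorem natDegree_depressedCubic [Nontrivial R] : (depressedCubic R m).natDegree = 3 := by
  rw [depressedCubic]
  compute_degree!

theorem map_depressedCubic {S : Type*} [CommRing S] (f : R →+* S) :
    (depressedCubic R m).map f = depressedCubic S m := by
  simp [depressedCubic, map_ofNat]

theorem aeval_depressedCubic {S : Type*} [CommRing S] [Algebra R S] (x : S) :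
    aeval x (depressedCubic R m) = x ^ 3 + 3 * m * x - 1 := by
  simp [depressedCubic, map_ofNat]

theorem irreducible_depressedCubic_int (hm : m ≠ 0) : Irreducible (depressedCubic ℤ m) := by
  rw [monic_depressedCubic.irreducible_iff_roots_eq_zero_of_degree_le_three
    (by simp [natDegree_depressedCubic]) (by simp [natDegree_depressedCubic]),
    Multiset.eq_zero_iff_forall_notMem]
  intro x hx
  have hroot : x * (x ^ 2 + 3 * m) = 1 := by
    have hx' := isRoot_of_mem_roots hx
    rw [IsRoot, ← coe_aeval_eq_eval, aeval_depressedCubic] at hx'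
    linear_combination hx'
  rcases Int.isUnit_iff.mp (.of_mul_eq_one _ hroot) with rfl | rfl <;> lia

theorem irreducible_depressedCubic_of_finrank_eq_two {K : Type*} [Field K] [CharZero K]
    (hdeg : Module.finrank ℚ K = 2) (hm : m ≠ 0) : Irreducible (depressedCubic K m) := by
  have hirr : Irreducible (depressedCubic ℚ m) := by
    rw [← map_depressedCubic (algebraMap ℤ ℚ),
      ← monic_depressedCubic.irreducible_iff_irreducible_map_fraction_map]
    exact irreducible_depressedCubic_int hm
  rw [← map_depressedCubic (algebraMap ℚ K)]
  exact irreducible_map_of_natDegree_eq_three hdeg hirr monic_depressedCubic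
    natDegree_depressedCubic

theorem vieta_depressedCubic [IsDomain R] {x y z : R} (hx : x ^ 3 + 3 * m * x - 1 = 0)
    (hy : y ^ 3 + 3 * m * y - 1 = 0) (hz : z ^ 3 + 3 * m * z - 1 = 0) (hxy : x ≠ y) (hyz : y ≠ z)
    (hxz : x ≠ z) :
    x + y + z = 0 ∧ x * y + y * z + x * z = 3 * m ∧ x * y * z = 1 := by
  have hxy_quadratic : x ^ 2 + x * y + y ^ 2 + 3 * m = 0 :=
    mul_left_cancel₀ (sub_ne_zero.mpr hxy) (by linear_combination hx - hy)
  have hyz_quadratic : y ^ 2 + y * z + z ^ 2 + 3 * m = 0 :=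
    mul_left_cancel₀ (sub_ne_zero.mpr hyz) (by linear_combination hy - hz)
  have hsum : x + y + z = 0 :=
    mul_left_cancel₀ (sub_ne_zero.mpr hxz) (by linear_combination hxy_quadratic - hyz_quadratic)
  have hpairs : x * y + y * z + x * z = 3 * m := by
    linear_combination (x + y) * hsum - hxy_quadratic
  exact ⟨hsum, hpairs, by linear_combination hx - x ^ 2 * hsum + x * hpairs⟩

theorem not_isOfFinOrder_of_depressedCubic_eq_zero {L : Type*} [Field L] [NumberField L]
    (hm : m ≠ 0) {x : L} (hx : x ^ 3 + 3 * m * x - 1 = 0) : ¬IsOfFinOrder x := by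
  intro hfin
  obtain ⟨φ⟩ : Nonempty (L →+* ℂ) := inferInstance
  obtain ⟨n, hn, hpow⟩ := isOfFinOrder_iff_pow_eq_one.mp hfin
  have hnorm : ‖φ x‖ = 1 :=
    Complex.norm_eq_one_of_pow_eq_one (by rw [← map_pow, hpow, map_one]) hn.ne'
  have hφ : 3 * (m : ℂ) * φ x = 1 - φ x ^ 3 := by
    have hφx := congrArg φ hx
    simp only [map_sub, map_add, map_mul, map_pow, map_one, map_ofNat, map_intCast, map_zero] at hφx
    linear_combination hφx
  have hle : 3 * |(m : ℝ)| ≤ 2 := by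
    calc 3 * |(m : ℝ)| = ‖1 - φ x ^ 3‖ := by simp [← hφ, hnorm]
      _ ≤ ‖(1 : ℂ)‖ + ‖φ x ^ 3‖ := norm_sub_le _ _
      _ = 2 := by norm_num [hnorm]
  have hm_one : (1 : ℝ) ≤ |(m : ℝ)| := by exact_mod_cast Int.one_le_abs hm
  linarith

theorem isIntegral_of_depressedCubic_eq_zero {x : R} (hx : x ^ 3 + 3 * m * x - 1 = 0) :
    IsIntegral ℤ x :=
  ⟨depressedCubic ℤ m, monic_depressedCubic, (aeval_depressedCubic x).trans hx⟩

theorem isIntegral_sub_one_mul_div_three {L : Type*} [Field L] [CharZero L] (hm : 3 ∣ m)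
    {x α : L} (hx : x ^ 3 + 3 * m * x - 1 = 0) (hα : α ^ 2 = -3 * (4 * (m : L) ^ 3 + 1)) :
    IsIntegral ℤ ((x - 1) * α / 3) := by
  obtain ⟨k, rfl⟩ := hm
  have hy : IsIntegral ℤ ((x - 1) ^ 2 / 3) := by
    refine ⟨X ^ 3 + C (6 * k - 1) * X ^ 2 + C (9 * k ^ 2 + 1) * X - C (3 * k ^ 2), by monicity!, ?_⟩
    simp only [eval₂_add, eval₂_sub, eval₂_mul, eval₂_pow, eval₂_X, eval₂_C]
    simp only [eq_intCast]
    push_cast at hx ⊢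
    linear_combination (1 / 27) * (x ^ 3 - 6 * x ^ 2 + (12 + 9 * k) * x - 7 - 18 * k) * hx
  refine .of_pow two_pos ?_
  have hsq : ((x - 1) * α / 3) ^ 2 =
      algebraMap ℤ L (-(4 * (3 * k) ^ 3 + 1)) * ((x - 1) ^ 2 / 3) := by
    rw [eq_intCast]
    push_cast at hα ⊢
    linear_combination (x - 1) ^ 2 / 9 * hα
  rw [hsq]
  exact isIntegral_algebraMap.mul hy

end DepressedCubic

section CubicExtension

variable {K L : Type*} [Field K] [Field L] [Algebra K L] {m : ℤ}

theorem algebraMap_pow_two_eq_of_pow_two_eq {α : K} (hα : α ^ 2 = -3 * (4 * (m : K) ^ 3 + 1)) :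
    algebraMap K L α ^ 2 = -3 * (4 * (m : L) ^ 3 + 1) := by
  rw [← map_pow, hα]
  simp only [map_mul, map_neg, map_add, map_pow, map_ofNat, map_intCast, map_one]

theorem splits_depressedCubic [CharZero L] {θ α : L} (hθ : θ ^ 3 + 3 * m * θ - 1 = 0)
    (hα : α ^ 2 = -3 * (4 * (m : L) ^ 3 + 1)) : (depressedCubic L m).Splits := by
  have hdiscr : (θ ^ 2 + 4 * m) * (θ ^ 2 + m) ^ 2 = 4 * (m : L) ^ 3 + 1 := by
    linear_combination (θ ^ 3 + 3 * m * θ + 1) * hθ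
  have hne : θ ^ 2 + m ≠ 0 := by
    have hodd : 4 * m ^ 3 + 1 ≠ 0 := by lia
    intro hzero
    rw [hzero, zero_pow two_ne_zero, mul_zero] at hdiscr
    exact hodd (by exact_mod_cast hdiscr.symm)
  -- `3 * α` is the product of the three differences of roots and `3 * (θ ^ 2 + m)`, the derivative
  -- at `θ`, that of the two which involve `θ`; so `α / (θ ^ 2 + m)` is the remaining difference.
  obtain ⟨δ, hδ⟩ : ∃ δ : L, δ * (θ ^ 2 + m) = α := ⟨_, div_mul_cancel₀ _ hne⟩
  have hδ_sq : δ ^ 2 = -3 * θ ^ 2 - 12 * m := by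
    refine mul_right_cancel₀ (pow_ne_zero 2 hne) ?_
    linear_combination (δ * (θ ^ 2 + m) + α) * hδ + hα + 3 * hdiscr
  have hfactor : depressedCubic L m =
      (X - C θ) * (X - C ((-θ + δ) / 2)) * (X - C ((-θ - δ) / 2)) := by
    have hpairs : θ * ((-θ + δ) / 2) + θ * ((-θ - δ) / 2) + (-θ + δ) / 2 * ((-θ - δ) / 2) =
        3 * m := by
      linear_combination -hδ_sq / 4
    have hprod : θ * ((-θ + δ) / 2) * ((-θ - δ) / 2) = 1 := by
      linear_combination hθ - θ / 4 * hδ_sq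
    have hsum : C θ + C ((-θ + δ) / 2) + C ((-θ - δ) / 2) = 0 := by
      rw [← C_add, ← C_add, ← C_0]
      congr 1
      ring
    rw [depressedCubic, ← hpairs, ← C_1, ← hprod]
    simp only [C_mul, C_add]
    linear_combination X ^ 2 * hsum
  rw [hfactor]
  exact ((Splits.X_sub_C _).mul (.X_sub_C _)).mul (.X_sub_C _)

theorem pairs_smul_sub_one_mul_div_three [CharZero L] {g : Gal(L/K)} {x : L}
    (hsum : x + g x + g (g x) = 0) (hpairs : x * g x + g x * g (g x) + x * g (g x) = 3 * m) {α : K}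
    (hα : algebraMap K L α ^ 2 = -3 * (4 * (m : L) ^ 3 + 1)) {z : L}
    (hz : z = (x - 1) * algebraMap K L α / 3) :
    z * g z + g z * g (g z) + z * g (g z) = -(4 * (m : L) ^ 3 + 1) * (m + 1) := by
  subst hz
  simp only [map_div₀, map_mul, map_sub, map_one, map_ofNat, AlgEquiv.commutes]
  linear_combination algebraMap K L α ^ 2 / 9 * (hpairs - 2 * hsum) + (m + 1) / 3 * hα

variable {pb : PowerBasis K L} (hpb : minpoly K pb.gen = depressedCubic K m)
include hpb

theorem depressedCubic_gen_eq_zero : pb.gen ^ 3 + 3 * m * pb.gen - 1 = 0 := by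
  rw [← aeval_depressedCubic (R := K), ← hpb, minpoly.aeval]

theorem finrank_eq_three_of_minpoly_gen_eq : Module.finrank K L = 3 := by
  rw [pb.finrank, ← pb.natDegree_minpoly, hpb, natDegree_depressedCubic]

theorem norm_gen_eq_one : Algebra.norm K pb.gen = 1 := by
  rw [Algebra.PowerBasis.norm_gen_eq_coeff_zero_minpoly, hpb, ← pb.finrank,
    finrank_eq_three_of_minpoly_gen_eq hpb]
  norm_num [depressedCubic]

theorem isGalois_of_minpoly_gen_eq [CharZero K] {α : K} (hα : α ^ 2 = -3 * (4 * (m : K) ^ 3 + 1)) :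
    IsGalois K L := by
  have : CharZero L := charZero_of_injective_algebraMap (algebraMap K L).injective
  have hroot : pb.gen ∈ (depressedCubic K m).rootSet L := by
    rw [mem_rootSet, aeval_depressedCubic]
    exact ⟨monic_depressedCubic.ne_zero, depressedCubic_gen_eq_zero hpb⟩
  have : (depressedCubic K m).IsSplittingField K L := by
    refine ⟨?_, top_unique ?_⟩
    · rw [map_depressedCubic]
      exact splits_depressedCubic (depressedCubic_gen_eq_zero hpb)
        (algebraMap_pow_two_eq_of_pow_two_eq hα)
    · rw [← pb.adjoin_gen_eq_top]
      exact Algebra.adjoin_mono (Set.singleton_subset_iff.mpr hroot)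
  refine .of_separable_splitting_field (p := depressedCubic K m) ?_
  rw [← hpb]
  exact (minpoly.irreducible pb.isIntegral_gen).separable

theorem vieta_smul_gen [IsGalois K L] {g : Gal(L/K)} (hg : g ≠ 1) :
    pb.gen + g pb.gen + g (g pb.gen) = 0 ∧
    pb.gen * g pb.gen + g pb.gen * g (g pb.gen) + pb.gen * g (g pb.gen) = 3 * m ∧
    pb.gen * g pb.gen * g (g pb.gen) = 1 := by
  have hfix {h : Gal(L/K)} (hh : pb.gen = h pb.gen) : h = 1 :=
    AlgEquiv.coe_toAlgHom_injective (pb.algHom_ext hh.symm)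
  have hroot := depressedCubic_gen_eq_zero hpb
  have hmap (h : Gal(L/K)) : h pb.gen ^ 3 + 3 * m * h pb.gen - 1 = 0 := by
    simpa [map_ofNat] using congrArg h hroot
  have hfin : FiniteDimensional K L := pb.finite
  have hg_sq : g * g ≠ 1 := by
    have hg_cube : g ^ 3 = 1 := by
      rw [← finrank_eq_three_of_minpoly_gen_eq hpb, ← IsGalois.card_aut_eq_finrank,
        pow_card_eq_one']
    intro hsq
    exact hg (by rw [← hg_cube, pow_succ, sq, hsq, one_mul])
  exact vieta_depressedCubic hroot (hmap g) (hmap (g * g)) (fun h ↦ hg (hfix h))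
    (fun h ↦ hg (hfix (g.injective h))) (fun h ↦ hg_sq (hfix h))

-- Modulo `P` the conjugates of an inertial `g` agree: `θ` forces `P ∣ 3`, and then the second
-- symmetric function of the conjugates of `(θ - 1) * α / 3`, a unit modulo `3`, must vanish.
theorem inertia_eq_bot_of_minpoly_gen_eq [CharZero L] [IsGalois K L] (hm : 3 ∣ m) {α : K}
    (hα : α ^ 2 = -3 * (4 * (m : K) ^ 3 + 1)) {P : Ideal (𝓞 L)} (hP : P ≠ ⊤) :
    P.inertia Gal(L/K) = ⊥ := by
  rw [Subgroup.eq_bot_iff_forall]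
  intro g hg
  by_contra hne
  obtain ⟨hsum, hpairs, hprod⟩ := vieta_smul_gen hpb hne
  have hroot := depressedCubic_gen_eq_zero hpb
  have hα' := algebraMap_pow_two_eq_of_pow_two_eq (L := L) hα
  let θ : 𝓞 L := ⟨pb.gen, isIntegral_of_depressedCubic_eq_zero hroot⟩
  let z : 𝓞 L := ⟨_, isIntegral_sub_one_mul_div_three hm hroot hα'⟩
  have hθ_sum : θ + g • θ + g • g • θ = 0 := RingOfIntegers.ext hsum
  have hθ_prod : θ * g • θ * g • g • θ = 1 := RingOfIntegers.ext hprod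
  have hz_pairs : z * g • z + g • z * g • g • z + z * g • g • z =
      -(4 * (m : 𝓞 L) ^ 3 + 1) * (m + 1) :=
    RingOfIntegers.ext (pairs_smul_sub_one_mul_div_three hsum hpairs hα' rfl)
  have hmk (x : 𝓞 L) : Ideal.Quotient.mk P (g • x) = Ideal.Quotient.mk P x :=
    Ideal.Quotient.eq.mpr (hg x)
  replace hθ_sum := congrArg (Ideal.Quotient.mk P) hθ_sum
  replace hθ_prod := congrArg (Ideal.Quotient.mk P) hθ_prod
  replace hz_pairs := congrArg (Ideal.Quotient.mk P) hz_pairs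
  simp only [map_add, map_mul, map_zero, map_one, map_neg, map_pow, map_ofNat, map_intCast, hmk]
    at hθ_sum hθ_prod hz_pairs
  have hthree : (3 : 𝓞 L ⧸ P) = 0 := by
    linear_combination Ideal.Quotient.mk P θ ^ 2 * hθ_sum - 3 * hθ_prod
  have hm_zero : (m : 𝓞 L ⧸ P) = 0 := by
    obtain ⟨k, rfl⟩ := hm
    push_cast
    rw [hthree, zero_mul]
  rw [hm_zero] at hz_pairs
  have hone : (1 : 𝓞 L ⧸ P) = 0 := by
    linear_combination hz_pairs - Ideal.Quotient.mk P z ^ 2 * hthree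
  exact hP (Ideal.Quotient.zero_eq_one_iff.mp hone.symm)

theorem three_dvd_classNumber_of_minpoly_gen_eq [NumberField K] [NumberField L] (hm : m ≠ 0)
    (hm3 : 3 ∣ m) {α : K} (hα : α ^ 2 = -3 * (4 * (m : K) ^ 3 + 1))
    (hpow : ∀ v : (𝓞 K)ˣ, ∃ w, w ^ 3 = v) : 3 ∣ classNumber K := by
  by_contra hclass
  have := isGalois_of_minpoly_gen_eq hpb hα
  have hroot := depressedCubic_gen_eq_zero hpb
  let θ : 𝓞 L := ⟨pb.gen, isIntegral_of_depressedCubic_eq_zero hroot⟩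
  have hθ : θ * (θ ^ 2 + 3 * m) = 1 := RingOfIntegers.ext (by
    change pb.gen * (pb.gen ^ 2 + 3 * m) = 1
    linear_combination hroot)
  let u : normOneUnits K L := ⟨.mkOfMulEqOne θ _ hθ,
    mem_normOneUnits.mpr (RingOfIntegers.ext (norm_gen_eq_one hpb))⟩
  have hfin : IsOfFinOrder u :=
    isOfFinOrder_normOneUnits_of_not_dvd_classNumber Nat.prime_three
      (finrank_eq_three_of_minpoly_gen_eq hpb) hclass
      (fun P hP ↦ inertia_eq_bot_of_minpoly_gen_eq hpb hm3 hα hP.ne_top) hpow u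
  let coe : normOneUnits K L →* L :=
    ((algebraMap (𝓞 L) L : 𝓞 L →* L).comp (Units.coeHom (𝓞 L))).comp (normOneUnits K L).subtype
  exact not_isOfFinOrder_of_depressedCubic_eq_zero hm hroot (coe.isOfFinOrder hfin)

end CubicExtension

theorem class_number_div_three_of_sqrt_neg_three_mul_four_cube_add_one_general
    (m : ℤ) (hm : 0 < m) (hm3 : 3 ∣ m)
    (K : Type*) [Field K] [NumberField K] (hdeg : Module.finrank ℚ K = 2)
    (hsqrt : ∃ α : K, α ^ 2 = -3 * (4 * (m : K) ^ 3 + 1)) :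
    3 ∣ NumberField.classNumber K := by
  obtain ⟨α, hα⟩ := hsqrt
  have : IsTotallyComplex K := by
    have : (0 : ℚ) < m := by exact_mod_cast hm
    exact isTotallyComplex_of_pow_two_eq_ratCast (d := -(3 * (4 * m ^ 3 + 1)))
      (neg_lt_zero.mpr (by positivity)) (α := α) (by push_cast; linear_combination hα)
  have hcubes := exists_pow_three_eq_unit_of_isTotallyComplex hdeg
    (not_isSquare_neg_three_of_pow_two_eq hdeg hm hα)
  have hirr : Irreducible (depressedCubic K m) :=
    irreducible_depressedCubic_of_finrank_eq_two hdeg hm.ne'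
  have := Fact.mk hirr
  let L := AdjoinRoot (depressedCubic K m)
  have : Module.Finite K L := monic_depressedCubic.finite_adjoinRoot
  have : NumberField L := .of_module_finite K L
  exact three_dvd_classNumber_of_minpoly_gen_eq (L := L)
    (AdjoinRoot.minpoly_powerBasis_gen_of_monic monic_depressedCubic) hm.ne' hm3 hα hcubes

/-- Let `m` be an odd positive integer with `m ≡ 0 (mod 3)`.  Then `3` divides the class
number of the imaginary quadratic field `ℚ(√(-3 * (4 * m ^ 3 + 1)))`. -/
theorem class_number_div_three_of_sqrt_neg_three_mul_four_cube_add_one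
    (m : ℤ) (hm : 0 < m) (hmodd : Odd m) (hm3 : 3 ∣ m)
    (K : Type*) [Field K] [NumberField K] (hdeg : Module.finrank ℚ K = 2)
    (hsqrt : ∃ α : K, α ^ 2 = -3 * (4 * (m : K) ^ 3 + 1)) :
    3 ∣ NumberField.classNumber K :=
  class_number_div_three_of_sqrt_neg_three_mul_four_cube_add_one_general m hm hm3 K hdeg hsqrt
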